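/- Let λ_τ > 0 and μ_τ > 0. Let A be exponentially distributed with rate λ_τ and B_τ be exponentially distributed with rate μ_τ. Let B be a nonnegative random variable with E[B^2] < ∞ and E[B] > 0, such that B, A and B_τ are mutually independent. Then for every μ > 0 satisfying 2μ·λ_τ·E[B] − λ_τ^2·E[B^2] > 0, the conditional probability satisfies P(B/μ > B_τ | B/μ > A) ≤ (λ_τ + μ_τ)^2·E[B^2] / (2μ·λ_τ·E[B] − λ_τ^2·E[B^2]). In particular, P(B/μ > B_τ | B/μ > A) → 0 as μ → ∞. -/

import Mathlib

/-!
Condition on `T = B / μ`, which is independent of `(A, Bτ)`. If `F_r` is the distribution function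
of the exponential law of rate `r`, then the numerator of the conditional probability is
`E[F_λτ(T) F_μτ(T)]` and its denominator is `E[F_λτ(T)]`. The bounds
`r x - (r x)² / 2 ≤ F_r(x) ≤ r |x|` hold on the whole real line, so the ratio is at most
`2 λτ μτ E[T²] / (2 λτ E[T] - λτ² E[T²])`, and `2 λτ μτ ≤ (λτ + μτ)²`.
-/

open MeasureTheory ProbabilityTheory Filter

/-- Mutual independence of three random variables `f, g, h` (with values in possibly
different measurable spaces), expressed through the factorization of the joint law
over all triples of measurable sets.  (Taking one of the sets to be `univ` recovers
the pairwise factorizations, so this is the usual notion of mutual independence.) -/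
def MutIndep3 {Ω α β γ : Type*} [MeasurableSpace Ω] [MeasurableSpace α]
    [MeasurableSpace β] [MeasurableSpace γ]
    (P : MeasureTheory.Measure Ω) (f : Ω → α) (g : Ω → β) (h : Ω → γ) : Prop :=
  ∀ s t u, MeasurableSet s → MeasurableSet t → MeasurableSet u →
    P (f ⁻¹' s ∩ g ⁻¹' t ∩ h ⁻¹' u) = P (f ⁻¹' s) * P (g ⁻¹' t) * P (h ⁻¹' u)

theorem exp_neg_le_one_sub_add_sq_div_two {x : ℝ} (hx : 0 ≤ x) :
    Real.exp (-x) ≤ 1 - x + x ^ 2 / 2 := by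
  have hpos : 0 < 1 - x + x ^ 2 / 2 := by nlinarith [sq_nonneg (x - 1)]
  rw [Real.exp_neg, inv_le_iff_one_le_mul₀ (Real.exp_pos x)]
  calc 1 ≤ 1 + x ^ 4 / 4 := le_add_of_nonneg_right (by positivity)
    _ = (1 - x + x ^ 2 / 2) * (1 + x + x ^ 2 / 2) := by ring
    _ ≤ (1 - x + x ^ 2 / 2) * Real.exp x :=
      mul_le_mul_of_nonneg_left (Real.quadratic_le_exp_of_nonneg hx) hpos.le

section ExpMeasure

variable {r : ℝ}

theorem expMeasure_real_Iio (hr : 0 < r) (x : ℝ) :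
    (expMeasure r).real (Set.Iio x) = if 0 ≤ x then 1 - Real.exp (-(r * x)) else 0 := by
  have : NullSingletonClass (expMeasure r) :=
    inferInstanceAs (NullSingletonClass (volume.withDensity _))
  have := isProbabilityMeasure_expMeasure hr
  rw [measureReal_congr Iio_ae_eq_Iic, ← cdf_eq_real, cdf_expMeasure_eq hr]

theorem expMeasure_real_Iio_le (hr : 0 < r) (x : ℝ) :
    (expMeasure r).real (Set.Iio x) ≤ r * |x| := by
  rw [expMeasure_real_Iio hr]
  split_ifs with hx
  · rw [abs_of_nonneg hx]
    linarith [Real.one_sub_le_exp_neg (r * x)]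
  · positivity

theorem sub_sq_le_expMeasure_real_Iio (hr : 0 < r) (x : ℝ) :
    r * x - r ^ 2 / 2 * x ^ 2 ≤ (expMeasure r).real (Set.Iio x) := by
  rw [expMeasure_real_Iio hr]
  split_ifs with hx
  · linarith [exp_neg_le_one_sub_add_sq_div_two (mul_nonneg hr.le hx), mul_pow r x 2]
  · have : r * x ≤ 0 := mul_nonpos_of_nonneg_of_nonpos hr.le (not_le.mp hx).le
    linarith [show 0 ≤ r ^ 2 / 2 * x ^ 2 by positivity]

end ExpMeasure

section Probability

variable {Ω : Type*} [MeasurableSpace Ω] {P : Measure Ω}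

theorem hasLaw_expMeasure_of_tail [IsProbabilityMeasure P] {X : Ω → ℝ} {r : ℝ} (hr : 0 < r)
    (hX : AEMeasurable X P)
    (htail : ∀ t : ℝ, 0 ≤ t → P {ω | t < X ω} = ENNReal.ofReal (Real.exp (-r * t))) :
    HasLaw X (expMeasure r) P := by
  have := isProbabilityMeasure_expMeasure hr
  have := Measure.isProbabilityMeasure_map hX
  have cdf_of_nonneg (t : ℝ) (ht : 0 ≤ t) : cdf (P.map X) t = 1 - Real.exp (-(r * t)) := by
    have htail_real : (P.map X).real (Set.Iic t)ᶜ = Real.exp (-(r * t)) := by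
      rw [Set.compl_Iic, map_measureReal_apply_of_aemeasurable hX measurableSet_Ioi, ← neg_mul,
        ← ENNReal.toReal_ofReal (Real.exp_nonneg _), ← htail t ht]
      rfl
    rw [cdf_eq_real, ← htail_real, probReal_compl_eq_one_sub measurableSet_Iic, sub_sub_cancel]
  have cdf_of_neg (t : ℝ) (ht : t < 0) : cdf (P.map X) t = 0 := by
    refine le_antisymm ?_ (cdf_nonneg _ t)
    calc cdf (P.map X) t ≤ cdf (P.map X) 0 := monotone_cdf _ ht.le
      _ = 0 := by simp [cdf_of_nonneg 0 le_rfl]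
  refine ⟨hX, Measure.eq_of_cdf _ _ (StieltjesFunction.ext fun t ↦ ?_)⟩
  rw [cdf_expMeasure_eq hr]
  split_ifs with ht
  · exact cdf_of_nonneg t ht
  · exact cdf_of_neg t (not_le.mp ht)

section MutIndep3

variable {α β γ δ : Type*} [MeasurableSpace α] [MeasurableSpace β] [MeasurableSpace γ]
  [MeasurableSpace δ] {f : Ω → α} {g : Ω → β} {h : Ω → γ}

theorem MutIndep3.comp_left {φ : α → δ} (hind : MutIndep3 P f g h) (hφ : Measurable φ) :
    MutIndep3 P (φ ∘ f) g h :=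
  fun s t u hs ht hu ↦ hind (φ ⁻¹' s) t u (hφ hs) ht hu

theorem MutIndep3.indepFun_right [IsProbabilityMeasure P] (hind : MutIndep3 P f g h) :
    IndepFun g h P :=
  indepFun_iff_measure_inter_preimage_eq_mul.mpr fun t u ht hu ↦ by
    simpa using hind Set.univ t u .univ ht hu

theorem MutIndep3.indepFun_prodMk [IsProbabilityMeasure P] (hind : MutIndep3 P f g h)
    (hf : AEMeasurable f P) (hg : AEMeasurable g P) (hh : AEMeasurable h P) :
    IndepFun f (fun ω ↦ (g ω, h ω)) P := by
  rw [indepFun_iff_map_prod_eq_prod_map_map hf (by fun_prop),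
    hind.indepFun_right.map_prod_eq_prod_map_map hg hh]
  refine Measure.ext_prod₃ fun {s t u} hs ht hu ↦ ?_
  rw [Measure.map_apply_of_aemeasurable (by fun_prop) (hs.prod (ht.prod hu)),
    Measure.prod_prod, Measure.prod_prod, Measure.map_apply_of_aemeasurable hf hs,
    Measure.map_apply_of_aemeasurable hg ht, Measure.map_apply_of_aemeasurable hh hu,
    ← mul_assoc, ← hind s t u hs ht hu, Set.inter_assoc]
  rfl

end MutIndep3

section Conditioning

variable {α β : Type*} [MeasurableSpace α] [MeasurableSpace β] {ν : Measure β}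
  {T : Ω → α} {X : Ω → β} {S : Set (α × β)}

theorem integrable_measureReal_prodMk_comp [IsFiniteMeasure P] [IsFiniteMeasure ν]
    (hT : AEMeasurable T P) (hS : MeasurableSet S) :
    Integrable (fun ω ↦ ν.real (Prod.mk (T ω) ⁻¹' S)) P :=
  (Measure.integrable_measure_prodMk_left hS (measure_ne_top _ _)).comp_aemeasurable hT

theorem measureReal_prodMk_mem_eq_integral [IsFiniteMeasure P]
    (hT : AEMeasurable T P) (hX : HasLaw X ν P) (hTX : IndepFun T X P) (hS : MeasurableSet S) :
    P.real {ω | (T ω, X ω) ∈ S} = ∫ ω, ν.real (Prod.mk (T ω) ⁻¹' S) ∂P := by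
  have : IsFiniteMeasure ν := hX.isFiniteMeasure_iff.mp inferInstance
  have hlaw : HasLaw (fun ω ↦ (T ω, X ω)) ((P.map T).prod ν) P :=
    (indepFun_iff_hasLaw_prodMk_prod ⟨hT, rfl⟩ hX).mp hTX
  have hsection : Measurable fun t ↦ ν (Prod.mk t ⁻¹' S) := measurable_measure_prodMk_left hS
  rw [measureReal_def, hlaw.measure_eq (p := (· ∈ S)) hS, Set.ofPred_mem_eq, Measure.prod_apply hS,
    lintegral_map' hsection.aemeasurable hT]
  exact (integral_toReal (hsection.comp_aemeasurable hT)
    (ae_of_all _ fun _ ↦ measure_lt_top _ _)).symm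

end Conditioning

section RandomThreshold

variable [IsProbabilityMeasure P] {T X Y : Ω → ℝ}

theorem measureReal_lt_inter_eq_integral {ν ρ : Measure ℝ} (hT : AEMeasurable T P)
    (hX : HasLaw X ν P) (hY : HasLaw Y ρ P) (hind : MutIndep3 P T X Y) :
    P.real ({ω | Y ω < T ω} ∩ {ω | X ω < T ω}) =
      ∫ ω, ν.real (Set.Iio (T ω)) * ρ.real (Set.Iio (T ω)) ∂P := by
  have : IsFiniteMeasure ν := hX.isFiniteMeasure_iff.mp inferInstance
  have : IsFiniteMeasure ρ := hY.isFiniteMeasure_iff.mp inferInstance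
  have hXY : HasLaw (fun ω ↦ (X ω, Y ω)) (ν.prod ρ) P :=
    (indepFun_iff_hasLaw_prodMk_prod hX hY).mp hind.indepFun_right
  have hS : MeasurableSet {p : ℝ × ℝ × ℝ | p.2 ∈ Set.Iio p.1 ×ˢ Set.Iio p.1} :=
    (measurableSet_lt (by fun_prop) measurable_fst).inter
      (measurableSet_lt (by fun_prop) measurable_fst)
  simp_rw [← measureReal_prod_prod]
  rw [Set.inter_comm]
  exact measureReal_prodMk_mem_eq_integral hT hXY
    (hind.indepFun_prodMk hT hX.aemeasurable hY.aemeasurable) hS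

variable {r s : ℝ}

theorem measureReal_lt_inter_le_of_expMeasure (hr : 0 < r) (hs : 0 < s) (hT : MemLp T 2 P)
    (hX : HasLaw X (expMeasure r) P) (hY : HasLaw Y (expMeasure s) P) (hind : MutIndep3 P T X Y) :
    P.real ({ω | Y ω < T ω} ∩ {ω | X ω < T ω}) ≤ r * s * ∫ ω, T ω ^ 2 ∂P := by
  rw [measureReal_lt_inter_eq_integral hT.aemeasurable hX hY hind, ← integral_const_mul]
  refine integral_mono_of_nonneg (ae_of_all _ fun ω ↦ by positivity)
    (hT.integrable_sq.const_mul _) (ae_of_all _ fun ω ↦ ?_)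
  calc (expMeasure r).real (Set.Iio (T ω)) * (expMeasure s).real (Set.Iio (T ω))
      ≤ (r * |T ω|) * (s * |T ω|) := by
        gcongr
        exacts [expMeasure_real_Iio_le hr _, expMeasure_real_Iio_le hs _]
    _ = r * s * T ω ^ 2 := by rw [← sq_abs (T ω)]; ring

theorem le_measureReal_lt_of_expMeasure (hr : 0 < r) (hT : MemLp T 2 P)
    (hX : HasLaw X (expMeasure r) P) (hTX : IndepFun T X P) :
    r * ∫ ω, T ω ∂P - r ^ 2 / 2 * ∫ ω, T ω ^ 2 ∂P ≤ P.real {ω | X ω < T ω} := by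
  have := isProbabilityMeasure_expMeasure hr
  have hS : MeasurableSet {p : ℝ × ℝ | p.2 < p.1} := measurableSet_lt measurable_snd measurable_fst
  have hlin : Integrable (fun ω ↦ r * T ω) P := (hT.integrable one_le_two).const_mul r
  have hquad : Integrable (fun ω ↦ r ^ 2 / 2 * T ω ^ 2) P := hT.integrable_sq.const_mul _
  calc r * ∫ ω, T ω ∂P - r ^ 2 / 2 * ∫ ω, T ω ^ 2 ∂P
      = ∫ ω, (r * T ω - r ^ 2 / 2 * T ω ^ 2) ∂P := by
        rw [integral_sub hlin hquad, integral_const_mul, integral_const_mul]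
    _ ≤ ∫ ω, (expMeasure r).real (Set.Iio (T ω)) ∂P :=
        integral_mono (hlin.sub hquad) (integrable_measureReal_prodMk_comp hT.aemeasurable hS)
          fun ω ↦ sub_sq_le_expMeasure_real_Iio hr (T ω)
    _ = P.real {ω | X ω < T ω} :=
        (measureReal_prodMk_mem_eq_integral hT.aemeasurable hX hTX hS).symm

theorem measureReal_lt_inter_div_le_of_expMeasure (hr : 0 < r) (hs : 0 < s) (hT : MemLp T 2 P)
    (hX : HasLaw X (expMeasure r) P) (hY : HasLaw Y (expMeasure s) P) (hind : MutIndep3 P T X Y)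
    (hpos : 0 < 2 * r * ∫ ω, T ω ∂P - r ^ 2 * ∫ ω, T ω ^ 2 ∂P) :
    P.real ({ω | Y ω < T ω} ∩ {ω | X ω < T ω}) / P.real {ω | X ω < T ω} ≤
      2 * r * s * (∫ ω, T ω ^ 2 ∂P) / (2 * r * ∫ ω, T ω ∂P - r ^ 2 * ∫ ω, T ω ^ 2 ∂P) := by
  have hTX : IndepFun T X P :=
    (hind.indepFun_prodMk hT.aemeasurable hX.aemeasurable hY.aemeasurable).comp
      measurable_id measurable_fst
  have hnum := measureReal_lt_inter_le_of_expMeasure hr hs hT hX hY hind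
  have hden := le_measureReal_lt_of_expMeasure hr hT hX hTX
  calc _ ≤ (r * s * ∫ ω, T ω ^ 2 ∂P) / (r * ∫ ω, T ω ∂P - r ^ 2 / 2 * ∫ ω, T ω ^ 2 ∂P) :=
        div_le_div₀ (measureReal_nonneg.trans hnum) hnum (by linarith) hden
    _ = _ := by
        rw [← mul_div_mul_left _ _ (two_ne_zero (α := ℝ))]
        ring_nf

theorem measureReal_lt_inter_div_le_of_expMeasure_div_const {c : ℝ} (hc : 0 < c) (hr : 0 < r)
    (hs : 0 < s) (hT : MemLp T 2 P) (hX : HasLaw X (expMeasure r) P)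
    (hY : HasLaw Y (expMeasure s) P) (hind : MutIndep3 P T X Y)
    (hpos : 0 < 2 * c * r * ∫ ω, T ω ∂P - r ^ 2 * ∫ ω, T ω ^ 2 ∂P) :
    P.real ({ω | Y ω < T ω / c} ∩ {ω | X ω < T ω / c}) / P.real {ω | X ω < T ω / c} ≤
      2 * r * s * (∫ ω, T ω ^ 2 ∂P) /
        (2 * c * r * ∫ ω, T ω ∂P - r ^ 2 * ∫ ω, T ω ^ 2 ∂P) := by
  have hscaled : 2 * r * ∫ ω, T ω / c ∂P - r ^ 2 * ∫ ω, (T ω / c) ^ 2 ∂P =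
      (2 * c * r * ∫ ω, T ω ∂P - r ^ 2 * ∫ ω, T ω ^ 2 ∂P) / c ^ 2 := by
    simp only [div_pow, integral_div]
    field_simp
  have hTc : MemLp (fun ω ↦ T ω / c) 2 P := by
    simpa only [div_eq_mul_inv] using hT.mul_const c⁻¹
  have hbound := measureReal_lt_inter_div_le_of_expMeasure hr hs hTc hX hY
    (hind.comp_left (measurable_id.div_const c)) (by rw [hscaled]; positivity)
  rw [hscaled] at hbound
  refine hbound.trans_eq ?_
  simp only [div_pow, integral_div]
  field_simp

end RandomThreshold

end Probability

theorem conditional_busy_cycle_prob_bound_and_limit_general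
    {Ω : Type*} [MeasurableSpace Ω] (P : Measure Ω) [IsProbabilityMeasure P]
    (lamτ muτ : ℝ) (hlam : 0 < lamτ) (hmu : 0 < muτ)
    (A Bτ B : Ω → ℝ) (hA : Measurable A) (hBτ : Measurable Bτ) (hB : Measurable B)
    (hexpA : ∀ t : ℝ, 0 ≤ t → P {ω | A ω > t} = ENNReal.ofReal (Real.exp (-lamτ * t)))
    (hexpBτ : ∀ t : ℝ, 0 ≤ t → P {ω | Bτ ω > t} = ENNReal.ofReal (Real.exp (-muτ * t)))
    (hB2 : Integrable (fun ω => B ω ^ 2) P)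
    (hEB : 0 < ∫ ω, B ω ∂P)
    (hindep : MutIndep3 P B A Bτ) :
    (∀ μ : ℝ, 0 < μ →
        0 < 2 * μ * lamτ * (∫ ω, B ω ∂P) - lamτ ^ 2 * (∫ ω, B ω ^ 2 ∂P) →
        (P ({ω | B ω / μ > Bτ ω} ∩ {ω | B ω / μ > A ω}) / P {ω | B ω / μ > A ω}).toReal ≤
          (lamτ + muτ) ^ 2 * (∫ ω, B ω ^ 2 ∂P) /
            (2 * μ * lamτ * (∫ ω, B ω ∂P) - lamτ ^ 2 * (∫ ω, B ω ^ 2 ∂P))) ∧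
      Tendsto
        (fun μ : ℝ =>
          (P ({ω | B ω / μ > Bτ ω} ∩ {ω | B ω / μ > A ω}) / P {ω | B ω / μ > A ω}).toReal)
        atTop (nhds 0) := by
  have hlawA := hasLaw_expMeasure_of_tail hlam hA.aemeasurable hexpA
  have hlawBτ := hasLaw_expMeasure_of_tail hmu hBτ.aemeasurable hexpBτ
  have hBL2 : MemLp B 2 P := (memLp_two_iff_integrable_sq hB.aestronglyMeasurable).mpr hB2
  rw [and_iff_left_of_imp]
  · intro μ hμ hpos
    rw [ENNReal.toReal_div]
    refine (measureReal_lt_inter_div_le_of_expMeasure_div_const hμ hlam hmu hBL2 hlawA hlawBτ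
      hindep hpos).trans ?_
    gcongr
    linarith [four_mul_le_sq_add lamτ muτ, mul_pos hlam hmu]
  · intro hbound
    have hden : Tendsto
        (fun μ : ℝ ↦ 2 * μ * lamτ * (∫ ω, B ω ∂P) - lamτ ^ 2 * ∫ ω, B ω ^ 2 ∂P) atTop atTop :=
      tendsto_atTop_add_const_right _ _
        (((tendsto_id.const_mul_atTop two_pos).atTop_mul_const hlam).atTop_mul_const hEB)
    refine squeeze_zero' (.of_forall fun _ ↦ ENNReal.toReal_nonneg) ?_
      (hden.const_div_atTop ((lamτ + muτ) ^ 2 * ∫ ω, B ω ^ 2 ∂P))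
    filter_upwards [eventually_gt_atTop 0, hden.eventually_gt_atTop 0] with μ hμ hpos
    exact hbound μ hμ hpos

/-- Let `λτ, μτ > 0`, `A` exponential with rate `λτ`, `Bτ` exponential with
rate `μτ`, and `B` nonnegative with `E[B²] < ∞` and `E[B] > 0`, with `B, A, Bτ` mutually
independent.  Then for every `μ > 0` with `2 μ λτ E[B] - λτ² E[B²] > 0`, the conditional
probability `P(B/μ > Bτ | B/μ > A) = P(B/μ > Bτ ∧ B/μ > A) / P(B/μ > A)` is at most
`(λτ + μτ)² E[B²] / (2 μ λτ E[B] - λτ² E[B²])`; in particular it tends to `0` as `μ → ∞`. -/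
theorem conditional_busy_cycle_prob_bound_and_limit
    {Ω : Type*} [MeasurableSpace Ω] (P : Measure Ω) [IsProbabilityMeasure P]
    (lamτ muτ : ℝ) (hlam : 0 < lamτ) (hmu : 0 < muτ)
    (A Bτ B : Ω → ℝ) (hA : Measurable A) (hBτ : Measurable Bτ) (hB : Measurable B)
    (hexpA : ∀ t : ℝ, 0 ≤ t → P {ω | A ω > t} = ENNReal.ofReal (Real.exp (-lamτ * t)))
    (hexpBτ : ∀ t : ℝ, 0 ≤ t → P {ω | Bτ ω > t} = ENNReal.ofReal (Real.exp (-muτ * t)))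
    (hB0 : ∀ ω, 0 ≤ B ω)
    (hB2 : Integrable (fun ω => B ω ^ 2) P)
    (hEB : 0 < ∫ ω, B ω ∂P)
    (hindep : MutIndep3 P B A Bτ) :
    (∀ μ : ℝ, 0 < μ →
        0 < 2 * μ * lamτ * (∫ ω, B ω ∂P) - lamτ ^ 2 * (∫ ω, B ω ^ 2 ∂P) →
        (P ({ω | B ω / μ > Bτ ω} ∩ {ω | B ω / μ > A ω}) / P {ω | B ω / μ > A ω}).toReal ≤
          (lamτ + muτ) ^ 2 * (∫ ω, B ω ^ 2 ∂P) /
            (2 * μ * lamτ * (∫ ω, B ω ∂P) - lamτ ^ 2 * (∫ ω, B ω ^ 2 ∂P))) ∧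
      Tendsto
        (fun μ : ℝ =>
          (P ({ω | B ω / μ > Bτ ω} ∩ {ω | B ω / μ > A ω}) / P {ω | B ω / μ > A ω}).toReal)
        atTop (nhds 0) :=
  conditional_busy_cycle_prob_bound_and_limit_general P lamτ muτ hlam hmu A Bτ B hA hBτ hB
    hexpA hexpBτ hB2 hEB hindep
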